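/- Assume conditions (A), (C), (S), (S*)₁ and (K*). Then there exist constants C > 0 and c > 0 such that for every r ≥ 0, every ω ∈ S^{n−1}, and every differentiable function û : [0,∞) → ℂᵐ satisfying A⁰û′(t) + i r A(ω) û(t) + L û(t) = 0 for all t ≥ 0 and the initial constraint i r Q(ω)û(0) + R û(0) = 0, one has |û(t)| ≤ C e^{−c η(r) t} |û(0)| for all t ≥ 0, where η(r) = r²/(1 + r²)². -/

import Mathlib

open Matrix BigOperators Finset

noncomputable section

/-- Complexification of a real matrix. -/
def cmap {a b : ℕ} (X : Matrix (Fin a) (Fin b) ℝ) : Matrix (Fin a) (Fin b) ℂ :=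
  X.map (fun x => (x : ℂ))

/-- Real part of the standard Hermitian inner product `⟨x, y⟩ = ∑ xᵢ conj yᵢ` on `ℂᵐ`. -/
def reIP {m : ℕ} (x y : Fin m → ℂ) : ℝ := (∑ i, x i * (starRingEnd ℂ) (y i)).re

/-- Symmetric part `X₁ = (X + Xᵀ)/2` of a real square matrix. -/
def symP {m : ℕ} (X : Matrix (Fin m) (Fin m) ℝ) : Matrix (Fin m) (Fin m) ℝ :=
  (2⁻¹ : ℝ) • (X + Xᵀ)

/-- Skew-symmetric part `X₂ = (X − Xᵀ)/2` of a real square matrix. -/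
def skewP {m : ℕ} (X : Matrix (Fin m) (Fin m) ℝ) : Matrix (Fin m) (Fin m) ℝ :=
  (2⁻¹ : ℝ) • (X - Xᵀ)

/-- Kernel of (the complexification of) a real matrix, as a subset of `ℂᵐ`. -/
def kerC {m : ℕ} (L : Matrix (Fin m) (Fin m) ℝ) : Set (Fin m → ℂ) :=
  {z | (cmap L).mulVec z = 0}

/-- Euclidean norm on `ℂᵐ`. -/
def cnrm {m : ℕ} (z : Fin m → ℂ) : ℝ := Real.sqrt (∑ i, Complex.normSq (z i))


def NN {m : ℕ} (z : Fin m → ℂ) : ℝ := ∑ i, Complex.normSq (z i)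

def qf {m : ℕ} (X : Matrix (Fin m) (Fin m) ℂ) (z : Fin m → ℂ) : ℝ := reIP (X.mulVec z) z

lemma NN_nonneg {m : ℕ} (z : Fin m → ℂ) : 0 ≤ NN z :=
  Finset.sum_nonneg fun _ _ => Complex.normSq_nonneg _

lemma NN_eq_zero {m : ℕ} {z : Fin m → ℂ} : NN z = 0 ↔ z = 0 := by
  unfold NN
  rw [Finset.sum_eq_zero_iff_of_nonneg (fun i _ => Complex.normSq_nonneg _)]
  simp [funext_iff]

lemma NN_pos {m : ℕ} {z : Fin m → ℂ} (h : z ≠ 0) : 0 < NN z :=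
  lt_of_le_of_ne (NN_nonneg z) (fun h' => h (NN_eq_zero.1 h'.symm))

lemma NN_smul {m : ℕ} (t : ℝ) (z : Fin m → ℂ) : NN ((t:ℂ) • z) = t^2 * NN z := by
  simp [NN, Finset.mul_sum, Complex.normSq_mul, Complex.normSq_ofReal, sq]

lemma NN_cont {m : ℕ} : Continuous (NN : (Fin m → ℂ) → ℝ) := by
  unfold NN
  exact continuous_finsetSum _ fun i _ => Complex.continuous_normSq.comp (continuous_apply i)

lemma reIP_dot {m : ℕ} (x y : Fin m → ℂ) : reIP x y = (x ⬝ᵥ star y).re := by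
  simp [reIP, dotProduct]

lemma reIP_eq {m : ℕ} (x y : Fin m → ℂ) :
    reIP x y = ∑ i, ((x i).re * (y i).re + (x i).im * (y i).im) := by
  simp [reIP, Complex.mul_re]

lemma reIP_add_left {m : ℕ} (x y z : Fin m → ℂ) : reIP (x + y) z = reIP x z + reIP y z := by
  simp [reIP_dot, add_dotProduct]

lemma reIP_neg_left {m : ℕ} (x z : Fin m → ℂ) : reIP (-x) z = -reIP x z := by
  simp [reIP_dot]

lemma reIP_sub_left {m : ℕ} (x y z : Fin m → ℂ) : reIP (x - y) z = reIP x z - reIP y z := by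
  simp [sub_eq_add_neg, reIP_add_left, reIP_neg_left]

lemma reIP_comm {m : ℕ} (x y : Fin m → ℂ) : reIP x y = reIP y x := by
  simp only [reIP_eq]; exact Finset.sum_congr rfl fun i _ => by ring

lemma reIP_add_right {m : ℕ} (x y z : Fin m → ℂ) : reIP z (x + y) = reIP z x + reIP z y := by
  simp [reIP_dot, dotProduct_add]

lemma reIP_smul_left {m : ℕ} (t : ℝ) (x z : Fin m → ℂ) : reIP ((t:ℂ) • x) z = t * reIP x z := by
  simp [reIP_dot]

lemma reIP_smul_right {m : ℕ} (t : ℝ) (x z : Fin m → ℂ) : reIP z ((t:ℂ) • x) = t * reIP z x := by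
  rw [reIP_comm, reIP_smul_left, reIP_comm]

lemma reIP_zero_left {m : ℕ} (z : Fin m → ℂ) : reIP 0 z = 0 := by
  simp [reIP_dot]

lemma reIP_zero_right {m : ℕ} (z : Fin m → ℂ) : reIP z 0 = 0 := by
  simp [reIP_dot]

lemma reIP_I {m : ℕ} (x z : Fin m → ℂ) : reIP (Complex.I • x) z = - reIP x (Complex.I • z) := by
  simp only [reIP_eq, ← Finset.sum_neg_distrib]
  exact Finset.sum_congr rfl fun i _ => by simp

lemma reIP_adj {a b : ℕ} (X : Matrix (Fin a) (Fin b) ℂ) (x : Fin b → ℂ) (y : Fin a → ℂ) :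
    reIP (X.mulVec x) y = reIP x (Xᴴ.mulVec y) := by
  rw [reIP_dot, reIP_dot, star_mulVec, conjTranspose_conjTranspose, dotProduct_comm,
    dotProduct_mulVec, dotProduct_comm]

lemma reIP_young {m : ℕ} (x y : Fin m → ℂ) (s : ℝ) (hs : 0 < s) :
    -(s * NN x + NN y / s) ≤ reIP x y := by
  rw [reIP_eq, NN, NN, Finset.mul_sum, Finset.sum_div, ← Finset.sum_add_distrib,
    ← Finset.sum_neg_distrib]
  refine Finset.sum_le_sum fun i _ => ?_
  have key : ∀ a b : ℝ, -(s * (a*a) + (b*b)/s) ≤ a * b := by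
    intro a b
    have : s * (a*a) + (b*b)/s + a * b = (s * a + b / 2)^2 / s + 3/4 * b^2 / s := by
      field_simp; ring
    have h2 : 0 ≤ (s * a + b / 2)^2 / s + 3/4 * b^2 / s := by positivity
    linarith
  have h1 := key (x i).re (y i).re
  have h2 := key (x i).im (y i).im
  rw [Complex.normSq_apply, Complex.normSq_apply, mul_add, add_div]
  linarith

lemma cmap_mul {a b c : ℕ} (X : Matrix (Fin a) (Fin b) ℝ) (Y : Matrix (Fin b) (Fin c) ℝ) :
    cmap (X * Y) = cmap X * cmap Y := by
  ext i j; simp [cmap, Matrix.mul_apply]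

lemma cmap_add {a b : ℕ} (X Y : Matrix (Fin a) (Fin b) ℝ) :
    cmap (X + Y) = cmap X + cmap Y := by
  ext i j; simp [cmap]

lemma cmap_sub {a b : ℕ} (X Y : Matrix (Fin a) (Fin b) ℝ) :
    cmap (X - Y) = cmap X - cmap Y := by
  ext i j; simp [cmap]

lemma cmap_neg {a b : ℕ} (X : Matrix (Fin a) (Fin b) ℝ) :
    cmap (-X) = -cmap X := by
  ext i j; simp [cmap]

lemma cmap_zero {a b : ℕ} : cmap (0 : Matrix (Fin a) (Fin b) ℝ) = 0 := by
  ext i j; simp [cmap]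

lemma cmap_one {a : ℕ} : cmap (1 : Matrix (Fin a) (Fin a) ℝ) = 1 := by
  ext i j; by_cases h : i = j <;> simp [cmap, h, Matrix.one_apply]

lemma cmap_smul {a b : ℕ} (t : ℝ) (X : Matrix (Fin a) (Fin b) ℝ) :
    cmap (t • X) = (t:ℂ) • cmap X := by
  ext i j; simp [cmap]

lemma cmap_ct {a b : ℕ} (X : Matrix (Fin a) (Fin b) ℝ) :
    cmap (Xᵀ) = (cmap X)ᴴ := by
  ext i j; simp [cmap]

lemma qf_add {m : ℕ} (X Y : Matrix (Fin m) (Fin m) ℂ) (z) : qf (X + Y) z = qf X z + qf Y z := by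
  simp [qf, add_mulVec, reIP_add_left]

lemma qf_sub {m : ℕ} (X Y : Matrix (Fin m) (Fin m) ℂ) (z) : qf (X - Y) z = qf X z - qf Y z := by
  simp [qf, sub_mulVec, reIP_sub_left]

lemma qf_neg {m : ℕ} (X : Matrix (Fin m) (Fin m) ℂ) (z) : qf (-X) z = -qf X z := by
  simp [qf, neg_mulVec, reIP_neg_left]

lemma qf_smul {m : ℕ} (t : ℝ) (X : Matrix (Fin m) (Fin m) ℂ) (z) :
    qf ((t:ℂ) • X) z = t * qf X z := by
  simp only [qf, smul_mulVec, reIP_smul_left]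

lemma qf_ct {m : ℕ} (X : Matrix (Fin m) (Fin m) ℂ) (z) : qf Xᴴ z = qf X z := by
  rw [qf, qf, reIP_adj, conjTranspose_conjTranspose, reIP_comm]

lemma qf_hom {m : ℕ} (X : Matrix (Fin m) (Fin m) ℂ) (t : ℝ) (z) :
    qf X ((t:ℂ) • z) = t^2 * qf X z := by
  simp only [qf, mulVec_smul, reIP_smul_left, reIP_smul_right]; ring

lemma qf_symP {m : ℕ} (X : Matrix (Fin m) (Fin m) ℝ) (z) : qf (cmap (symP X)) z = qf (cmap X) z := by
  rw [symP, cmap_smul, cmap_add, cmap_ct, qf_smul, qf_add, qf_ct]; ring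

lemma qf_skewP {m : ℕ} (X : Matrix (Fin m) (Fin m) ℝ) (z) :
    qf (Complex.I • cmap (skewP X)) z = qf (Complex.I • cmap X) z := by
  rw [skewP, cmap_smul, cmap_sub, cmap_ct, smul_comm, qf_smul, smul_sub, qf_sub]
  have : Complex.I • (cmap X)ᴴ = -(Complex.I • cmap X)ᴴ := by
    rw [conjTranspose_smul]; simp
  rw [this, qf_neg, qf_ct]; ring

lemma qf_I_symm {m : ℕ} (X : Matrix (Fin m) (Fin m) ℝ) (h : Xᵀ = X) (z) :
    qf (Complex.I • cmap X) z = 0 := by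
  have h1 := qf_skewP X z
  rw [← h1]
  simp [skewP, h, cmap_zero, qf, reIP_zero_left]

lemma reIP_cont {X : Type*} [TopologicalSpace X] {m : ℕ} {f g : X → Fin m → ℂ}
    (hf : Continuous f) (hg : Continuous g) : Continuous fun x => reIP (f x) (g x) := by
  unfold reIP
  refine Complex.continuous_re.comp (continuous_finsetSum _ fun i _ => ?_)
  exact ((continuous_apply i).comp hf).mul
    (Complex.continuous_conj.comp ((continuous_apply i).comp hg))

lemma qf_cont {X : Type*} [TopologicalSpace X] {m : ℕ} {F : X → Matrix (Fin m) (Fin m) ℂ}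
    {g : X → Fin m → ℂ}
    (hf : Continuous F) (hg : Continuous g) : Continuous fun x => qf (F x) (g x) := by
  unfold qf
  exact reIP_cont (hf.matrix_mulVec hg) hg

lemma cmap_cont {X : Type*} [TopologicalSpace X] {a b : ℕ} {F : X → Matrix (Fin a) (Fin b) ℝ}
    (hf : Continuous F) : Continuous fun x => cmap (F x) := by
  unfold cmap
  exact hf.matrix_map Complex.continuous_ofReal

/-- psd: zero of form implies kernel -/
lemma psd_ker {m : ℕ} (G : Matrix (Fin m) (Fin m) ℂ) (hG : Gᴴ = G) (hp : ∀ z, 0 ≤ qf G z)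
    (z) (hz : qf G z = 0) : G.mulVec z = 0 := by
  set y := G.mulVec z with hy
  by_contra hne
  have hN := NN_pos hne
  have hyy : reIP y y = NN y := by
    rw [reIP_eq, NN]; exact Finset.sum_congr rfl fun i _ => by rw [Complex.normSq_apply]
  have hexp : ∀ t : ℝ, qf G (z + (t:ℂ) • y) = 2 * t * NN y + t^2 * qf G y := by
    intro t
    have e : reIP (G.mulVec y) z = NN y := by rw [reIP_adj, hG, ← hy, hyy]
    have hz' : reIP y z = 0 := hz
    simp only [qf, mulVec_add, mulVec_smul, reIP_add_left, reIP_add_right, reIP_smul_left,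
      reIP_smul_right, ← hy, hyy, e, hz']
    ring
  have hq := hp y
  have h := hp (z + ((-(NN y / (qf G y + 1)) : ℝ) : ℂ) • y)
  rw [hexp] at h
  have : 2 * -(NN y / (qf G y + 1)) * NN y + (-(NN y / (qf G y + 1)))^2 * qf G y
      = - (NN y / (qf G y + 1))^2 * (qf G y + 2) := by
    field_simp; ring
  rw [this] at h
  have : 0 < (NN y / (qf G y + 1))^2 * (qf G y + 2) := by positivity
  linarith

lemma NN_compact {m : ℕ} : IsCompact {z : Fin m → ℂ | NN z = 1} := by
  refine Metric.isCompact_of_isClosed_isBounded (isClosed_eq NN_cont continuous_const) ?_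
  refine (Metric.isBounded_closedBall (x := (0 : Fin m → ℂ)) (r := 1)).subset ?_
  intro z hz
  rw [mem_closedBall_zero_iff, pi_norm_le_iff_of_nonneg zero_le_one]
  intro i
  have h1 : Complex.normSq (z i) ≤ NN z :=
    Finset.single_le_sum (f := fun i => Complex.normSq (z i))
      (fun i _ => Complex.normSq_nonneg _) (Finset.mem_univ i)
  rw [Set.mem_ofPred_eq] at hz
  rw [hz, Complex.normSq_eq_norm_sq] at h1
  nlinarith [norm_nonneg (z i)]

lemma compact_lower {P : Type*} [TopologicalSpace P] {m : ℕ} (T : Set P) (hT : IsCompact T)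
    (f g : P → (Fin m → ℂ) → ℝ)
    (hf : Continuous (fun x : P × (Fin m → ℂ) => f x.1 x.2))
    (hg : Continuous (fun x : P × (Fin m → ℂ) => g x.1 x.2))
    (hfh : ∀ p z (t : ℝ), f p ((t:ℂ) • z) = t^2 * f p z)
    (hgh : ∀ p z (t : ℝ), g p ((t:ℂ) • z) = t^2 * g p z)
    (hg0 : ∀ p ∈ T, ∀ z, 0 ≤ g p z)
    (hpos : ∀ p ∈ T, ∀ z, z ≠ 0 → g p z = 0 → 0 < f p z) :
    ∃ C ≥ (0:ℝ), ∃ c > (0:ℝ), ∀ p ∈ T, ∀ z, c * NN z ≤ f p z + C * g p z := by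
  set W : Set (P × (Fin m → ℂ)) := T ×ˢ {z | NN z = 1} with hW
  have hWc : IsCompact W := hT.prod NN_compact
  have hne : ∀ x ∈ W, x.2 ≠ 0 := by
    intro x hx h0
    have h2 : NN x.2 = 1 := hx.2
    rw [NN_eq_zero.2 h0] at h2; norm_num at h2
  have hZc : IsCompact (W ∩ {x | f x.1 x.2 ≤ 0}) :=
    hWc.inter_right (isClosed_le hf continuous_const)
  obtain ⟨δ, hδ, hδ'⟩ := hZc.exists_forall_le' (a := 0) hg.continuousOn (by
    rintro x ⟨hx, hx0⟩
    refine lt_of_le_of_ne (hg0 _ hx.1 _) fun h => ?_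
    exact absurd (hpos _ hx.1 _ (hne x hx) h.symm) (not_lt.2 hx0))
  obtain ⟨B, hB⟩ := (hWc.bddBelow_image hf.continuousOn)
  have hB' : ∀ x ∈ W, -|B| ≤ f x.1 x.2 := fun x hx =>
    (neg_abs_le B).trans (hB ⟨x, hx, rfl⟩)
  have hC : 0 ≤ (|B| + 1) / δ := by positivity
  obtain ⟨c, hc, hc'⟩ := hWc.exists_forall_le' (a := 0)
    (f := fun x => f x.1 x.2 + (|B| + 1) / δ * g x.1 x.2)
    (hf.add (continuous_const.mul hg)).continuousOn (by
      intro x hx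
      by_cases h0 : f x.1 x.2 ≤ 0
      · have h1 := hδ' x ⟨hx, h0⟩
        have h2 := hB' x hx
        have h3 : (|B| + 1) / δ * δ ≤ (|B| + 1) / δ * g x.1 x.2 := mul_le_mul_of_nonneg_left h1 hC
        rw [div_mul_cancel₀ _ hδ.ne'] at h3
        linarith
      · have := mul_nonneg hC (hg0 _ hx.1 x.2)
        push Not at h0
        linarith)
  refine ⟨_, hC, c, hc, fun p hp z => ?_⟩
  by_cases hz : z = 0
  · have e : z = ((0:ℝ):ℂ) • z := by simp [hz]
    rw [e, hfh, hgh, NN_smul]; simp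
  · have hN := NN_pos hz
    have hs : Real.sqrt (NN z) ^ 2 = NN z := Real.sq_sqrt hN.le
    have hsp : 0 < Real.sqrt (NN z) := Real.sqrt_pos.2 hN
    set s := Real.sqrt (NN z)
    have e : z = (s:ℂ) • ((s⁻¹ : ℝ) : ℂ) • z := by
      rw [smul_smul, ← Complex.ofReal_mul, mul_inv_cancel₀ hsp.ne']; simp
    have h1 : NN (((s⁻¹ : ℝ) : ℂ) • z) = 1 := by
      rw [NN_smul, ← hs]; field_simp
    have h2 := hc' (p, ((s⁻¹ : ℝ) : ℂ) • z) ⟨hp, h1⟩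
    simp only at h2
    rw [e, hfh, hgh, NN_smul, h1]
    nlinarith [sq_nonneg s]

lemma bound_upper {P : Type*} [TopologicalSpace P] {m : ℕ} (T : Set P) (hT : IsCompact T)
    (f : P → (Fin m → ℂ) → ℝ)
    (hf : Continuous (fun x : P × (Fin m → ℂ) => f x.1 x.2))
    (hfh : ∀ p z (t : ℝ), f p ((t:ℂ) • z) = t^2 * f p z) :
    ∃ C ≥ (0:ℝ), ∀ p ∈ T, ∀ z, f p z ≤ C * NN z := by
  obtain ⟨C, hC, c, hc, h⟩ := compact_lower T hT (fun p z => - f p z) (fun _ z => NN z) hf.neg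
    (NN_cont.comp continuous_snd) (fun p z t => by simp only [hfh]; ring)
    (fun p z t => NN_smul t z) (fun _ _ z => NN_nonneg z)
    (fun _ _ z hz h => absurd h (NN_pos hz).ne')
  refine ⟨C, hC, fun p hp z => ?_⟩
  have := h p hp z
  have := mul_nonneg hc.le (NN_nonneg z)
  linarith

lemma NN_add_le {m : ℕ} (x y : Fin m → ℂ) : NN (x + y) ≤ 2 * NN x + 2 * NN y := by
  simp only [NN, Finset.mul_sum, ← Finset.sum_add_distrib]
  refine Finset.sum_le_sum fun i _ => ?_
  simp only [Complex.normSq_apply, Pi.add_apply, Complex.add_re, Complex.add_im]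
  nlinarith [sq_nonneg ((x i).re - (y i).re), sq_nonneg ((x i).im - (y i).im)]

/-- splitting off the kernel -/
lemma psd_split {m : ℕ} (G : Matrix (Fin m) (Fin m) ℂ) (hG : Gᴴ = G) (hp : ∀ z, 0 ≤ qf G z) :
    ∃ C ≥ (0:ℝ), ∀ z, ∃ v w : Fin m → ℂ, z = v + w ∧ G.mulVec v = 0 ∧ NN w ≤ C * qf G z := by
  set k := LinearMap.ker (Matrix.mulVecLin G) with hk
  obtain ⟨p, hpp⟩ := k.subtype.exists_leftInverse_of_injective k.ker_subtype
  have hpv : ∀ v, G.mulVec v = 0 → ((p v : k) : Fin m → ℂ) = v := by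
    intro v hv
    have hvk : v ∈ k := by rw [hk, LinearMap.mem_ker, Matrix.mulVecLin_apply, hv]
    have := LinearMap.congr_fun hpp ⟨v, hvk⟩
    simp only [LinearMap.comp_apply, Submodule.subtype_apply, LinearMap.id_apply] at this
    rw [this]
  have hpk : ∀ z, G.mulVec ((p z : k) : Fin m → ℂ) = 0 := by
    intro z
    exact LinearMap.mem_ker.1 (p z).2
  let p' : (Fin m → ℂ) →ₗ[ℂ] (Fin m → ℂ) := k.subtype ∘ₗ p
  have hp'c : Continuous p' := LinearMap.continuous_of_finiteDimensional p'
  obtain ⟨C, hC, c, hc, h⟩ := compact_lower (Set.univ : Set Unit) isCompact_univ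
    (fun _ z => qf G z) (fun _ z => NN (p' z))
    (qf_cont continuous_const continuous_snd)
    (NN_cont.comp (hp'c.comp continuous_snd))
    (fun _ z t => qf_hom G t z) (fun _ z t => by rw [map_smul, NN_smul])
    (fun _ _ z => NN_nonneg _) (by
      intro _ _ z hz h0
      refine lt_of_le_of_ne (hp z) fun hq => hz ?_
      have h1 := psd_ker G hG hp z hq.symm
      rw [← hpv z h1]
      exact NN_eq_zero.1 h0)
  refine ⟨c⁻¹, by positivity, fun z => ⟨p' z, z - p' z, by abel, hpk z, ?_⟩⟩
  have h1 := h () trivial (z - p' z)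
  have hpp' : p' (p' z) = p' z := hpv _ (hpk z)
  have h2 : NN (p' (z - p' z)) = 0 := by
    rw [map_sub, hpp', sub_self]; exact NN_eq_zero.2 rfl
  have h3 : qf G (z - p' z) = qf G z := by
    have e : G.mulVec (z - p' z) = G.mulVec z := by
      rw [mulVec_sub, show G.mulVec (p' z) = 0 from hpk z, sub_zero]
    rw [qf, e, reIP_adj, hG, e, reIP_comm, qf]
  rw [h2, h3] at h1
  rw [inv_mul_eq_div, le_div_iff₀ hc]
  linarith

/-- Lemma B -/
lemma lemB {P : Type*} [TopologicalSpace P] {m : ℕ} (T : Set P) (hT : IsCompact T)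
    (F : P → Matrix (Fin m) (Fin m) ℂ) (hF : Continuous F)
    (G : Matrix (Fin m) (Fin m) ℂ) (hG : Gᴴ = G) (hp : ∀ z, 0 ≤ qf G z)
    (hker : ∀ p ∈ T, ∀ z, G.mulVec z = 0 → 0 ≤ qf (F p) z) :
    ∃ C ≥ (0:ℝ), ∀ p ∈ T, ∀ z, ∀ s > (0:ℝ), -(s * NN z) - (C / s + C) * qf G z ≤ qf (F p) z := by
  obtain ⟨C0, hC0, hsplit⟩ := psd_split G hG hp
  have hbd : ∀ F : P → Matrix (Fin m) (Fin m) ℂ, Continuous F →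
      ∃ C ≥ (0:ℝ), ∀ p ∈ T, ∀ z, NN ((F p).mulVec z) ≤ C * NN z := fun F hF =>
    bound_upper T hT (fun p z => NN ((F p).mulVec z))
      (NN_cont.comp ((hF.comp continuous_fst).matrix_mulVec continuous_snd))
      (fun p z t => by rw [mulVec_smul, NN_smul])
  obtain ⟨C1, hC1, h1⟩ := hbd F hF
  obtain ⟨C2, hC2, h2⟩ := hbd (fun p => (F p)ᴴ) hF.matrix_conjTranspose
  obtain ⟨C3, hC3, h3⟩ := bound_upper T hT (fun p z => - qf (F p) z)
      (qf_cont (hF.comp continuous_fst) continuous_snd).neg (fun p z t => by rw [qf_hom]; ring)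
  set D := 2 * (C1 + C2) + 1 with hD
  have hDpos : 0 < D := by positivity
  refine ⟨C0 * (2 * D + 1 + C3), by positivity, fun p hpT z s hs => ?_⟩
  obtain ⟨v, w, rfl, hv, hw⟩ := hsplit z
  have e : qf (F p) (v + w) = qf (F p) v + reIP ((F p).mulVec v) w + reIP ((F p)ᴴ.mulVec v) w
      + qf (F p) w := by
    have : reIP ((F p)ᴴ.mulVec v) w = reIP ((F p).mulVec w) v := by
      rw [reIP_adj, conjTranspose_conjTranspose, reIP_comm]
    rw [this]
    simp only [qf, mulVec_add, reIP_add_left, reIP_add_right]; ring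
  obtain ⟨s0, hs0, hs01, hs0s, hs0i⟩ : ∃ s0 > (0:ℝ), s0 ≤ 1 ∧ s0 ≤ s ∧ 1 / s0 ≤ 1 / s + 1 := by
    refine ⟨min s 1, by positivity, min_le_right _ _, min_le_left _ _, ?_⟩
    have : 0 < 1 / s := by positivity
    rcases le_total s 1 with h | h
    · rw [min_eq_left h]; linarith
    · rw [min_eq_right h]; linarith
  have hs' : 0 < s0 / D := by positivity
  have a1 := reIP_young ((F p).mulVec v) w (s0 / D) hs'
  have a2 := reIP_young ((F p)ᴴ.mulVec v) w (s0 / D) hs'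
  have a3 := h3 p hpT w
  have a4 := hker p hpT v hv
  have a5 : NN v ≤ 2 * NN (v + w) + 2 * NN w := by
    have := NN_add_le (v + w) (-w)
    have e2 : NN (-w) = NN w := by simp [NN]
    rwa [add_neg_cancel_right, e2] at this
  have b1 := mul_le_mul_of_nonneg_left (h1 p hpT v) hs'.le
  have b2 := mul_le_mul_of_nonneg_left (h2 p hpT v) hs'.le
  have hNw := NN_nonneg w
  have hNz := NN_nonneg (v + w)
  have b3 : s0 / D * (C1 * NN v) + s0 / D * (C2 * NN v) ≤ s0 * NN (v + w) + s0 * NN w := by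
    have : s0 / D * (C1 * NN v) + s0 / D * (C2 * NN v) = s0 * ((C1 + C2) / D) * NN v := by
      field_simp
    rw [this]
    have h4 : (C1 + C2) / D ≤ 1/2 := by rw [div_le_iff₀ hDpos]; linarith
    have h5 : s0 * ((C1 + C2) / D) * NN v ≤ s0 * (1/2) * NN v :=
      mul_le_mul_of_nonneg_right (mul_le_mul_of_nonneg_left h4 hs0.le) (NN_nonneg v)
    nlinarith
  have b4 : NN w / (s0 / D) ≤ D * (1 / s + 1) * NN w := by
    have : NN w / (s0 / D) = D * (1 / s0) * NN w := by field_simp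
    rw [this]
    exact mul_le_mul_of_nonneg_right (mul_le_mul_of_nonneg_left hs0i hDpos.le) hNw
  have b5 : s0 * NN (v + w) ≤ s * NN (v + w) := mul_le_mul_of_nonneg_right hs0s hNz
  have b6 : s0 * NN w ≤ 1 * NN w := mul_le_mul_of_nonneg_right hs01 hNw
  have his : 0 < 1 / s := by positivity
  have b7 : (2 * D + 1 + C3) * (1 / s + 1) * NN w ≤
      (2 * D + 1 + C3) * (1 / s + 1) * (C0 * qf G (v + w)) :=
    mul_le_mul_of_nonneg_left hw (by positivity)
  have b8 : (C0 * (2 * D + 1 + C3) / s + C0 * (2 * D + 1 + C3)) * qf G (v + w)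
      = (2 * D + 1 + C3) * (1 / s + 1) * (C0 * qf G (v + w)) := by field_simp
  have b9 : 0 ≤ (1 + C3) * (1 / s) * NN w := by positivity
  rw [b8, e]
  nlinarith

/-- sphere is compact -/
lemma sphere_compact (n : ℕ) : IsCompact {ω : Fin n → ℝ | ∑ j, ω j ^ 2 = 1} := by
  refine Metric.isCompact_of_isClosed_isBounded (isClosed_eq (by fun_prop) continuous_const) ?_
  refine (Metric.isBounded_closedBall (x := (0 : Fin n → ℝ)) (r := 1)).subset ?_
  intro z hz
  rw [mem_closedBall_zero_iff, pi_norm_le_iff_of_nonneg zero_le_one]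
  intro i
  have h1 : z i ^ 2 ≤ ∑ j, z j ^ 2 :=
    Finset.single_le_sum (f := fun i => z i ^ 2)
      (fun i _ => sq_nonneg _) (Finset.mem_univ i)
  rw [Set.mem_ofPred_eq] at hz
  rw [hz] at h1
  rw [Real.norm_eq_abs, abs_le_one_iff_mul_self_le_one]
  nlinarith

lemma deriv_mulVec {a b : ℕ} (X : Matrix (Fin a) (Fin b) ℂ) {u : ℝ → Fin b → ℂ} {u' : Fin b → ℂ}
    {s : Set ℝ} {t : ℝ} (h : HasDerivWithinAt u u' s t) :
    HasDerivWithinAt (fun t => X.mulVec (u t)) (X.mulVec u') s t := by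
  rw [hasDerivWithinAt_pi] at h ⊢
  intro i
  simp only [mulVec, dotProduct]
  exact HasDerivWithinAt.fun_sum fun j _ => (h j).const_mul _

lemma deriv_qf {m : ℕ} (X : Matrix (Fin m) (Fin m) ℂ) (hX : Xᴴ = X)
    {u : ℝ → Fin m → ℂ} {u' : Fin m → ℂ}
    {s : Set ℝ} {t : ℝ} (h : HasDerivWithinAt u u' s t) :
    HasDerivWithinAt (fun t => qf X (u t)) (2 * reIP (X.mulVec u') (u t)) s t := by
  have h1 := deriv_mulVec X h
  have e : 2 * reIP (X.mulVec u') (u t) =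
      reIP (X.mulVec u') (u t) + reIP (X.mulVec (u t)) u' := by
    have : reIP (X.mulVec (u t)) u' = reIP (X.mulVec u') (u t) := by
      rw [reIP_adj, hX, reIP_comm]
    rw [this]; ring
  rw [e]
  rw [hasDerivWithinAt_pi] at h h1
  have h2 : HasDerivWithinAt (fun t => ∑ i, X.mulVec (u t) i * star (u t i))
      (∑ i, (X.mulVec u' i * star (u t i) + X.mulVec (u t) i * star (u' i))) s t :=
    HasDerivWithinAt.fun_sum fun i _ => (h1 i).mul (h i).star
  have h3 := Complex.reCLM.hasFDerivAt.comp_hasDerivWithinAt t h2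
  have e2 : reIP (X.mulVec u') (u t) + reIP (X.mulVec (u t)) u' = Complex.reCLM
      (∑ i, (X.mulVec u' i * star (u t i) + X.mulVec (u t) i * star (u' i))) := by
    rw [Finset.sum_add_distrib, map_add]; rfl
  rw [e2]
  exact h3

lemma exp_decay (E E' : ℝ → ℝ) (k : ℝ)
    (hE : ∀ t, 0 ≤ t → HasDerivWithinAt E (E' t) (Set.Ici 0) t)
    (hle : ∀ t, 0 ≤ t → E' t ≤ -k * E t) (t : ℝ) (ht : 0 ≤ t) :
    E t ≤ Real.exp (-(k * t)) * E 0 := by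
  have hd : ∀ t, 0 ≤ t → HasDerivWithinAt (fun t => Real.exp (k * t) * E t)
      (Real.exp (k * t) * k * E t + Real.exp (k * t) * E' t) (Set.Ici 0) t := by
    intro t ht
    have h1 : HasDerivWithinAt (fun t => Real.exp (k * t)) (Real.exp (k * t) * k) (Set.Ici 0) t := by
      have := ((hasDerivAt_id t).const_mul k).exp
      simpa using this.hasDerivWithinAt
    exact h1.mul (hE t ht)
  have hanti : AntitoneOn (fun t => Real.exp (k * t) * E t) (Set.Ici 0) := by
    refine antitoneOn_of_hasDerivWithinAt_nonpos (convex_Ici 0)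
      (fun t ht => (hd t ht).continuousWithinAt)
      (f' := fun t => Real.exp (k * t) * k * E t + Real.exp (k * t) * E' t) ?_ ?_
    · intro x hx
      exact (hd x (interior_subset hx)).mono interior_subset
    · intro x hx
      have := hle x (interior_subset hx)
      have h2 := Real.exp_pos (k * x)
      nlinarith
  have h : Real.exp (k * t) * E t ≤ Real.exp (k * 0) * E 0 :=
    hanti (Set.mem_Ici.2 le_rfl) (Set.mem_Ici.2 ht) ht
  simp only [mul_zero, Real.exp_zero, one_mul] at h
  rw [Real.exp_neg, inv_mul_eq_div, le_div_iff₀ (Real.exp_pos _)]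
  linarith

lemma scal_core (c2 C C' C2 ε α r D M N X Y Z P : ℝ) (hc2 : 0 < c2) (hC : 0 ≤ C) (hC' : 0 ≤ C')
    (hC2 : 0 ≤ C2) (hε : 0 < ε) (hα : 0 < α) (hr : 0 ≤ r) (hD : 0 ≤ D) (hM : 0 ≤ M)
    (h1 : ∀ s > (0:ℝ), -(s * N) - (C / s + C) * D ≤ X)
    (h2 : ∀ s > (0:ℝ), -(s * N) - (C' / s + C') * M ≤ Y)
    (h3 : c2 * N ≤ Z + C2 * (M + P)) (hP : r * P = 0)
    (hε' : ε * (C2 + 4 * C' / c2 + C') ≤ 1) (hα' : α * (1 + 4 * C / (ε * c2) + C) ≤ 1) :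
    ε * α * c2 / 2 * (r ^ 2 / (1 + r ^ 2) ^ 2) * N ≤
      D + α / (1 + r^2) * (r * X + M - D) + ε * α * r / (1 + r^2)^2 * (r * Z + Y) := by
  rcases hr.eq_or_lt with h0 | hr
  · subst h0
    have : α ≤ 1 := by
      have : 0 ≤ α * (4 * C / (ε * c2) + C) := by positivity
      linarith
    simp
    nlinarith
  have hP0 : P = 0 := by
    rcases mul_eq_zero.1 hP with h | h
    · exact absurd h hr.ne'
    · exact h
  subst hP0
  have hρ : 0 < 1 + r^2 := by positivity
  have hr1 : r / (1 + r^2) ≤ 1 := by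
    rw [div_le_one hρ]; nlinarith [sq_nonneg (r - 1)]
  have hρ1 : 1 / (1 + r^2) ≤ 1 := by
    rw [div_le_one hρ]; nlinarith
  have hr2 : r^2 / (1 + r^2) ≤ 1 := by
    rw [div_le_one hρ]; linarith
  have k1 := mul_le_mul_of_nonneg_left (h1 (ε * c2 / 4 * (r / (1 + r^2))) (by positivity))
    (show 0 ≤ α / (1 + r^2) * r by positivity)
  have k2 := mul_le_mul_of_nonneg_left (h2 (r * c2 / 4) (by positivity))
    (show 0 ≤ ε * α * r / (1 + r^2)^2 by positivity)
  have k3 := mul_le_mul_of_nonneg_left h3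
    (show 0 ≤ ε * α * r / (1 + r^2)^2 * r by positivity)
  have e1 : α / (1 + r^2) * r * (-(ε * c2 / 4 * (r / (1 + r^2)) * N)
      - (C / (ε * c2 / 4 * (r / (1 + r^2))) + C) * D)
      = -(ε * α * c2 / 4 * (r ^ 2 / (1 + r ^ 2) ^ 2) * N) - α * (4 * C / (ε * c2)) * D
        - α * C * D * (r / (1 + r^2)) := by
    field_simp; ring
  have e2 : ε * α * r / (1 + r^2)^2 * (-(r * c2 / 4 * N) - (C' / (r * c2 / 4) + C') * M)
      = -(ε * α * c2 / 4 * (r ^ 2 / (1 + r ^ 2) ^ 2) * N)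
        - α / (1 + r^2) * M * ε * (4 * C' / c2) * (1 / (1 + r^2))
        - α / (1 + r^2) * M * ε * C' * (r / (1 + r^2)) := by
    field_simp; ring
  have e3 : ε * α * r / (1 + r^2)^2 * r * (Z + C2 * (M + 0)) =
      ε * α * r / (1 + r^2)^2 * r * Z + α / (1 + r^2) * M * ε * C2 * (r^2 / (1 + r^2)) := by
    field_simp; ring
  have e4 : ε * α * r / (1 + r^2)^2 * r * (c2 * N) =
      ε * α * c2 * (r ^ 2 / (1 + r ^ 2) ^ 2) * N := by
    field_simp
  rw [e1] at k1
  rw [e2] at k2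
  rw [e3, e4] at k3
  have l1 : α * C * D * (r / (1 + r^2)) ≤ α * C * D :=
    mul_le_of_le_one_right (by positivity) hr1
  have l2 : α / (1 + r^2) * M * ε * (4 * C' / c2) * (1 / (1 + r^2)) ≤
      α / (1 + r^2) * M * ε * (4 * C' / c2) := mul_le_of_le_one_right (by positivity) hρ1
  have l3 : α / (1 + r^2) * M * ε * C' * (r / (1 + r^2)) ≤ α / (1 + r^2) * M * ε * C' :=
    mul_le_of_le_one_right (by positivity) hr1
  have l4 : α / (1 + r^2) * M * ε * C2 * (r^2 / (1 + r^2)) ≤ α / (1 + r^2) * M * ε * C2 :=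
    mul_le_of_le_one_right (by positivity) hr2
  have l5 : α / (1 + r^2) * M * (ε * (C2 + 4 * C' / c2 + C')) ≤ α / (1 + r^2) * M :=
    mul_le_of_le_one_right (by positivity) hε'
  have l6 : D * (α * (1 + 4 * C / (ε * c2) + C)) ≤ D := mul_le_of_le_one_right hD hα'
  have l7 : α / (1 + r^2) * D ≤ α * D := by
    have : α / (1 + r^2) * D = α * D * (1 / (1 + r^2)) := by ring
    rw [this]
    exact mul_le_of_le_one_right (by positivity) hρ1
  linarith

lemma mat_id1 {m m1 : ℕ} (r : ℂ) (Q R : Matrix (Fin m1) (Fin m) ℂ)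
    (V A L : Matrix (Fin m) (Fin m) ℂ) :
    (r • Q + R) * V * (r • A + L) =
      (r * r) • (Q * V * A) + r • (Q * V * L + R * V * A) + R * V * L := by
  simp only [Matrix.add_mul, Matrix.mul_add, Matrix.smul_mul, Matrix.mul_smul, smul_add, smul_smul]
  abel

lemma mat_id2 {m : ℕ} (a b r : ℝ) (S K A L : Matrix (Fin m) (Fin m) ℂ) :
    (1 + (a:ℂ) • S + (b:ℂ) • (-(Complex.I • K))) * (((r:ℂ) * Complex.I) • A + L) =
      (r:ℂ) • (Complex.I • A) + L + (a:ℂ) • ((r:ℂ) • (Complex.I • (S * A)) + S * L)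
        + (b:ℂ) • ((r:ℂ) • (K * A) + -(Complex.I • (K * L))) := by
  have hI : (r:ℂ) * Complex.I * ((b:ℂ) * Complex.I) = -((b:ℂ) * r) := by
    linear_combination (r:ℂ) * b * Complex.I_mul_I
  simp only [Matrix.add_mul, Matrix.mul_add, Matrix.smul_mul, Matrix.mul_smul, Matrix.neg_mul,
    Matrix.one_mul, smul_add, smul_neg, smul_smul]
  rw [hI, neg_smul, neg_neg, mul_comm ((r:ℂ) * Complex.I) (a:ℂ)]
  abel

set_option maxHeartbeats 4000000

/-- **Theorem 5.1 (decay of regularity-loss type for systems with constraint,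
pointwise estimate).** Under conditions (A), (C), (S), (S*)₁ and (K*), solutions of
`A⁰û′ + i r A(ω) û + L û = 0` whose data satisfy the constraint
`i r Q(ω)û(0) + R û(0) = 0` obey `|û(t)| ≤ C e^{−c η(r) t} |û(0)|`, `η(r) = r²/(1+r²)²`. -/
theorem decay_regularity_loss_with_constraint
    (m n m1 : ℕ) (hm1 : 1 ≤ m1) (hm1m : m1 < m) (hn : 1 ≤ n)
    (A0 : Matrix (Fin m) (Fin m) ℝ) (A : Fin n → Matrix (Fin m) (Fin m) ℝ)
    (L : Matrix (Fin m) (Fin m) ℝ)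
    (Q : Fin n → Matrix (Fin m1) (Fin m) ℝ) (R : Matrix (Fin m1) (Fin m) ℝ)
    -- condition (A)
    (hA0sym : A0ᵀ = A0) (hAsym : ∀ j, (A j)ᵀ = A j)
    (hA0pos : ∀ z : Fin m → ℂ, z ≠ 0 → 0 < reIP ((cmap A0).mulVec z) z)
    (hLnn : ∀ z : Fin m → ℂ, 0 ≤ reIP ((cmap L).mulVec z) z)
    (hLker : ∃ z : Fin m → ℂ, z ≠ 0 ∧ z ∈ kerC L)
    -- condition (C)
    (hC1 : ∀ ω : Fin n → ℝ, (∑ j, ω j ^ 2 = 1) →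
      (∑ j, ω j • Q j) * A0⁻¹ * (∑ j, ω j • A j) = 0)
    (hC2 : R * A0⁻¹ * L = 0)
    (hC3 : ∀ ω : Fin n → ℝ, (∑ j, ω j ^ 2 = 1) →
      (∑ j, ω j • Q j) * A0⁻¹ * L + R * A0⁻¹ * (∑ j, ω j • A j) = 0)
    -- condition (S)
    (S : Matrix (Fin m) (Fin m) ℝ)
    (hSA0 : (S * A0)ᵀ = S * A0)
    (hSLnn : ∀ z : Fin m → ℂ, 0 ≤ reIP ((cmap (symP (S * L) + symP L)).mulVec z) z)
    (hSLker : kerC (symP (S * L) + symP L) = kerC L)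
    -- `Π₁` : the orthogonal projection of `ℂ^{m₁}` onto `Image(R)`; `Π₂ = I − Π₁`
    (Pi1 : Matrix (Fin m1) (Fin m1) ℝ)
    (hPi1sym : Pi1ᵀ = Pi1) (hPi1idem : Pi1 * Pi1 = Pi1)
    (hPi1fix : ∀ φ : Fin m → ℝ, Pi1.mulVec (R.mulVec φ) = R.mulVec φ)
    (hPi1ran : ∀ z : Fin m1 → ℝ, ∃ φ : Fin m → ℝ, Pi1.mulVec z = R.mulVec φ)
    -- condition (S*)₁ : there is `S̃` with `S̃₁ ≥ 0` on `Image(R)` such that, with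
    -- `T(ω) = (Π₁Q(ω))ᵀ S̃ R`, one has `i(SA(ω) − T(ω))₂ ≥ 0` on `Ker(L₁)`
    (St : Matrix (Fin m1) (Fin m1) ℝ)
    (hSt : ∀ φ : Fin m → ℂ,
      0 ≤ reIP ((cmap (symP St)).mulVec ((cmap R).mulVec φ)) ((cmap R).mulVec φ))
    (hSstar1 : ∀ ω : Fin n → ℝ, (∑ j, ω j ^ 2 = 1) → ∀ z ∈ kerC (symP L),
      0 ≤ reIP ((Complex.I • cmap (skewP
        (S * (∑ j, ω j • A j) - (Pi1 * (∑ j, ω j • Q j))ᵀ * St * R))).mulVec z) z)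
    -- condition (K*): positivity on `X_ω ∩ Ker(L)`
    (K : (Fin n → ℝ) → Matrix (Fin m) (Fin m) ℝ)
    (hKsmooth : ∀ i j, ContDiff ℝ (⊤ : ℕ∞) (fun ω => K ω i j))
    (hKodd : ∀ ω : Fin n → ℝ, (∑ j, ω j ^ 2 = 1) → K (-ω) = - K ω)
    (hKA0 : ∀ ω : Fin n → ℝ, (∑ j, ω j ^ 2 = 1) → (K ω * A0)ᵀ = -(K ω * A0))
    (hKpos : ∀ ω : Fin n → ℝ, (∑ j, ω j ^ 2 = 1) → ∀ z : Fin m → ℂ,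
      (cmap ((1 - Pi1) * (∑ j, ω j • Q j))).mulVec z = 0 → z ∈ kerC L → z ≠ 0 →
      0 < reIP ((cmap (symP (K ω * (∑ j, ω j • A j)))).mulVec z) z) :
    ∃ C > (0:ℝ), ∃ c > (0:ℝ), ∀ r : ℝ, 0 ≤ r → ∀ ω : Fin n → ℝ, (∑ j, ω j ^ 2 = 1) →
      ∀ u u' : ℝ → (Fin m → ℂ),
      (∀ t : ℝ, 0 ≤ t → HasDerivWithinAt u (u' t) (Set.Ici 0) t) →
      (∀ t : ℝ, 0 ≤ t →
        (cmap A0).mulVec (u' t)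
          + ((r : ℂ) * Complex.I) • (cmap (∑ j, ω j • A j)).mulVec (u t)
          + (cmap L).mulVec (u t) = 0) →
      (((r : ℂ) * Complex.I) • (cmap (∑ j, ω j • Q j)).mulVec (u 0)
          + (cmap R).mulVec (u 0) = 0) →
      ∀ t : ℝ, 0 ≤ t →
        cnrm (u t) ≤ C * Real.exp (-(c * (r ^ 2 / (1 + r ^ 2) ^ 2) * t)) * cnrm (u 0) := by

  have hCC1 := hC1
  have hCC2 := hC2
  have hCC3 := hC3
  clear hC1 hC2 hC3
  set T : Set (Fin n → ℝ) := {ω | ∑ j, ω j ^ 2 = 1} with hTdef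
  have hT : IsCompact T := sphere_compact n
  have hAc : Continuous fun ω : Fin n → ℝ => ∑ j, ω j • A j :=
    continuous_finsetSum _ fun j _ => (continuous_apply j).smul continuous_const
  have hQc : Continuous fun ω : Fin n → ℝ => ∑ j, ω j • Q j :=
    continuous_finsetSum _ fun j _ => (continuous_apply j).smul continuous_const
  have hKc : Continuous K := by
    refine continuous_pi fun i => continuous_pi fun j => (hKsmooth i j).continuous
  have hAωsym : ∀ ω : Fin n → ℝ, (∑ j, ω j • A j)ᵀ = ∑ j, ω j • A j := by
    intro ω
    rw [transpose_sum]
    exact Finset.sum_congr rfl fun j _ => by rw [transpose_smul, hAsym]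
  set Aω : (Fin n → ℝ) → Matrix (Fin m) (Fin m) ℝ := fun ω => ∑ j, ω j • A j with hAω
  set Qω : (Fin n → ℝ) → Matrix (Fin m1) (Fin m) ℝ := fun ω => ∑ j, ω j • Q j with hQω
  set Tω : (Fin n → ℝ) → Matrix (Fin m) (Fin m) ℝ :=
    fun ω => (Pi1 * Qω ω)ᵀ * St * R with hTω
  have hTc : Continuous Tω := by
    exact (((continuous_const.matrix_mul hQc).matrix_transpose).matrix_mul
      continuous_const).matrix_mul continuous_const
  have symH : ∀ X : Matrix (Fin m) (Fin m) ℝ, (cmap (symP X))ᴴ = cmap (symP X) := by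
    intro X
    rw [← cmap_ct, symP, transpose_smul, transpose_add, transpose_transpose, add_comm]
  have hKXc : ∀ X : Matrix (Fin m) (Fin m) ℝ,
      Continuous fun ω => -(Complex.I • cmap (K ω * X)) := by
    intro X
    have h := cmap_cont (hKc.matrix_mul (continuous_const (y := X)))
    exact (h.const_smul Complex.I).neg
  -- H estimate
  have cx : Continuous fun ω => Complex.I • cmap (skewP (S * Aω ω - Tω ω)) := by
    have e1 : Continuous fun ω => S * Aω ω := continuous_const.matrix_mul hAc
    have e2 : Continuous fun ω => S * Aω ω - Tω ω := e1.sub hTc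
    have e3 : Continuous fun ω => skewP (S * Aω ω - Tω ω) := by
      unfold skewP
      exact (e2.sub e2.matrix_transpose).const_smul (2⁻¹ : ℝ)
    have e4 := cmap_cont e3
    exact e4.const_smul Complex.I
  obtain ⟨C, hC, hX⟩ := lemB T hT (fun ω => Complex.I • cmap (skewP (S * Aω ω - Tω ω)))
    cx
    (cmap (symP L)) (symH L) (fun z => by rw [qf_symP]; exact hLnn z)
    (fun ω hω z hz => hSstar1 ω hω z hz)
  have hMH : (cmap (symP (S * L) + symP L))ᴴ = cmap (symP (S * L) + symP L) := by
    rw [cmap_add, conjTranspose_add, symH, symH]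
  have hMk : ∀ z, (cmap (symP (S * L) + symP L)).mulVec z = 0 → (cmap L).mulVec z = 0 := by
    intro z hz
    have : z ∈ kerC (symP (S * L) + symP L) := hz
    rw [hSLker] at this
    exact this
  -- K L estimate
  obtain ⟨C', hC', hY⟩ := lemB T hT (fun ω => -(Complex.I • cmap (K ω * L)))
    (hKXc L)
    (cmap (symP (S * L) + symP L)) hMH hSLnn
    (fun ω hω z hz => by
      have : (cmap (K ω * L)).mulVec z = 0 := by
        rw [cmap_mul, ← mulVec_mulVec, hMk z hz, mulVec_zero]
      rw [qf_neg, qf, smul_mulVec, this, smul_zero, reIP_zero_left, neg_zero])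
  -- K A estimate
  have cz1 : Continuous fun p : (Fin n → ℝ) × (Fin m → ℂ) => qf (cmap (K p.1 * Aω p.1)) p.2 := by
    have e1 : Continuous fun ω => K ω * Aω ω := hKc.matrix_mul hAc
    exact qf_cont ((cmap_cont e1).comp continuous_fst) continuous_snd
  have cz2 : Continuous fun p : (Fin n → ℝ) × (Fin m → ℂ) =>
      qf (cmap (symP (S * L) + symP L)) p.2 + NN ((cmap ((1 - Pi1) * Qω p.1)).mulVec p.2) := by
    have e1 : Continuous fun ω => (1 - Pi1) * Qω ω := continuous_const.matrix_mul hQc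
    have e2 : Continuous fun p : (Fin n → ℝ) × (Fin m → ℂ) =>
        (cmap ((1 - Pi1) * Qω p.1)).mulVec p.2 :=
      ((cmap_cont e1).comp continuous_fst).matrix_mulVec continuous_snd
    exact (qf_cont continuous_const continuous_snd).add (NN_cont.comp e2)
  obtain ⟨C2, hC2, c2, hc2, hZ⟩ := compact_lower T hT (fun ω z => qf (cmap (K ω * Aω ω)) z)
    (fun ω z => qf (cmap (symP (S * L) + symP L)) z + NN ((cmap ((1 - Pi1) * Qω ω)).mulVec z))
    cz1 cz2
    (fun ω z t => qf_hom _ t z)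
    (fun ω z t => by rw [qf_hom, mulVec_smul, NN_smul]; ring)
    (fun ω hω z => add_nonneg (hSLnn z) (NN_nonneg _))
    (by
      intro ω hω z hz h0
      have q1 : 0 ≤ qf (cmap (symP (S * L) + symP L)) z := hSLnn z
      have q2 := NN_nonneg ((cmap ((1 - Pi1) * Qω ω)).mulVec z)
      have q3 := psd_ker _ hMH hSLnn z (by linarith)
      have q4 := NN_eq_zero.1 (show NN ((cmap ((1 - Pi1) * Qω ω)).mulVec z) = 0 by linarith)
      have := hKpos ω hω z q4 (hMk z q3) hz
      rw [← qf_symP]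
      exact this)
  -- bounds for the energy
  have hbd : ∀ F : (Fin n → ℝ) → Matrix (Fin m) (Fin m) ℂ, Continuous F →
      ∃ C ≥ (0:ℝ), ∀ p ∈ T, ∀ z, |qf (F p) z| ≤ C * NN z := fun F hF =>
    bound_upper T hT (fun p z => |qf (F p) z|)
      (qf_cont (hF.comp continuous_fst) continuous_snd).abs
      (fun p z t => by rw [qf_hom, abs_mul, abs_of_nonneg (sq_nonneg t)])
  obtain ⟨C3, hC3, hb3⟩ := hbd (fun _ => cmap (S * A0)) continuous_const
  obtain ⟨C4, hC4, hb4⟩ := hbd (fun ω => -(Complex.I • cmap (K ω * A0)))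
    (hKXc A0)
  obtain ⟨C5, hC5, hb5⟩ := hbd (fun _ => cmap A0) continuous_const
  obtain ⟨c0, hc0, hb0⟩ : ∃ c > (0:ℝ), ∀ ω ∈ T, ∀ z, c * NN z ≤ qf (cmap A0) z := by
    obtain ⟨C, hC, c, hc, h⟩ := compact_lower T hT (fun _ z => qf (cmap A0) z) (fun _ _ => 0)
      (qf_cont continuous_const continuous_snd) continuous_const
      (fun ω z t => qf_hom _ t z) (fun ω z t => by simp) (fun _ _ _ => le_rfl)
      (fun _ _ z hz _ => hA0pos z hz)
    exact ⟨c, hc, fun ω hω z => by simpa using h ω hω z⟩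
  -- choice of constants
  obtain ⟨ε, hε, hε1, hε'⟩ : ∃ ε > (0:ℝ), ε ≤ 1 ∧ ε * (C2 + 4 * C' / c2 + C') ≤ 1 := by
    have hx : 0 ≤ C2 + 4 * C' / c2 + C' := by positivity
    refine ⟨1 / (C2 + 4 * C' / c2 + C' + 1), by positivity, ?_, ?_⟩
    · rw [div_le_one (by positivity)]; linarith
    · rw [div_mul_eq_mul_div, div_le_one (by positivity)]; linarith
  obtain ⟨α, hα, hα', hα''⟩ : ∃ α > (0:ℝ), α * (1 + 4 * C / (ε * c2) + C) ≤ 1 ∧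
      α * (C3 + C4) ≤ c0 / 2 := by
    have hx : 0 ≤ 1 + 4 * C / (ε * c2) + C := by positivity
    set x := 1 + 4 * C / (ε * c2) + C
    set y := C3 + C4 with hy
    have hy0 : 0 ≤ y := by positivity
    refine ⟨min (1 / (x + 1)) (c0 / 2 / (y + 1)), by positivity, ?_, ?_⟩
    · refine (mul_le_mul_of_nonneg_right (min_le_left _ _) hx).trans ?_
      rw [div_mul_eq_mul_div, div_le_one (by positivity)]; linarith
    · refine (mul_le_mul_of_nonneg_right (min_le_right _ _) hy0).trans ?_
      rw [div_mul_eq_mul_div, div_le_iff₀ (by positivity)]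
      nlinarith
  set C6 := C5 + α * (C3 + C4) + 1 with hC6
  have hC6p : 0 < C6 := by positivity
  -- invertibility of A0
  have hinv : A0⁻¹ * A0 = 1 := by
    refine Matrix.nonsing_inv_mul _ ?_
    rw [← Matrix.isUnit_iff_isUnit_det, ← Matrix.mulVec_injective_iff_isUnit]
    intro x1 x2 hx12
    obtain ⟨x, hx⟩ : ∃ x, x = x1 - x2 := ⟨_, rfl⟩
    have hx' : A0.mulVec x = 0 := by rw [hx, mulVec_sub, sub_eq_zero]; exact hx12
    by_contra hne1
    have hne : ¬ x = 0 := by rw [hx, sub_eq_zero]; exact hne1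
    have h := hA0pos (fun i => (x i : ℂ)) (fun h0 => hne (by
      funext i; have := congr_fun h0 i; simpa using this))
    have : (cmap A0).mulVec (fun i => (x i : ℂ)) = 0 := by
      funext i
      have := congr_fun hx' i
      simp only [mulVec, dotProduct, cmap, map_apply, Pi.zero_apply] at this ⊢
      exact_mod_cast this
    rw [this, reIP_zero_left] at h
    exact lt_irrefl _ h
  set k := 2 * (ε * α * c2 / 2) / C6 with hk
  refine ⟨Real.sqrt (C6 / (c0 / 2)), by positivity, k / 2, by positivity, ?_⟩
  intro r hr ω hω u u' hu heq hcon t ht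
  have hωT : ω ∈ T := hω
  change ∀ t : ℝ, 0 ≤ t → (cmap A0).mulVec (u' t)
          + ((r : ℂ) * Complex.I) • (cmap (Aω ω)).mulVec (u t)
          + (cmap L).mulVec (u t) = 0 at heq
  change ((r : ℂ) * Complex.I) • (cmap (Qω ω)).mulVec (u 0) + (cmap R).mulVec (u 0) = 0 at hcon
  have heq' : ∀ t, 0 ≤ t → (cmap A0).mulVec (u' t) =
      -((((r : ℂ) * Complex.I) • cmap (Aω ω) + cmap L).mulVec (u t)) := by
    intro t ht
    rw [add_mulVec, smul_mulVec, eq_neg_iff_add_eq_zero, ← add_assoc]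
    exact heq t ht
  -- constraint
  have hcons : ∀ t, 0 ≤ t →
      (((r : ℂ) * Complex.I) • cmap (Qω ω) + cmap R).mulVec (u t) = 0 := by
    have hd : ∀ t, 0 ≤ t → HasDerivWithinAt
        (fun t => (((r : ℂ) * Complex.I) • cmap (Qω ω) + cmap R).mulVec (u t)) 0 (Set.Ici 0) t := by
      intro t ht
      have h1 := deriv_mulVec (((r : ℂ) * Complex.I) • cmap (Qω ω) + cmap R) (hu t ht)
      convert h1 using 1
      have hu' : u' t = (cmap A0⁻¹).mulVec ((cmap A0).mulVec (u' t)) := by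
        rw [mulVec_mulVec, ← cmap_mul, hinv, cmap_one, one_mulVec]
      rw [hu', heq' t ht, mulVec_neg, mulVec_neg, mulVec_mulVec, mulVec_mulVec]
      have g1 : cmap (Qω ω) * cmap A0⁻¹ * cmap (Aω ω) = 0 := by
        rw [← cmap_mul, ← cmap_mul, hCC1 ω hω, cmap_zero]
      have g2 : cmap R * cmap A0⁻¹ * cmap L = 0 := by
        rw [← cmap_mul, ← cmap_mul, hCC2, cmap_zero]
      have g3 : cmap (Qω ω) * cmap A0⁻¹ * cmap L + cmap R * cmap A0⁻¹ * cmap (Aω ω) = 0 := by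
        rw [← cmap_mul, ← cmap_mul, ← cmap_mul, ← cmap_mul, ← cmap_add, hCC3 ω hω, cmap_zero]
      rw [mat_id1, g1, g2, g3]
      simp
    intro t ht
    have h0 := constant_of_has_deriv_right_zero (a := 0) (b := t)
      (f := fun t => (((r : ℂ) * Complex.I) • cmap (Qω ω) + cmap R).mulVec (u t))
      (fun x hx => (hd x hx.1).continuousWithinAt.mono Set.Icc_subset_Ici_self)
      (fun x hx => (hd x hx.1).mono (Set.Ici_subset_Ici.2 hx.1)) t ⟨ht, le_rfl⟩
    rw [h0, add_mulVec, smul_mulVec]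
    exact hcon
  -- energy
  set a := α / (1 + r^2) with ha
  set b := ε * α * r / (1 + r^2)^2 with hb
  have ha0 : 0 ≤ a := by positivity
  have hb0' : 0 ≤ b := by positivity
  have haα : a ≤ α := div_le_self hα.le (by nlinarith)
  have hbα : b ≤ α := by
    rw [hb, div_le_iff₀ (by positivity)]
    have h1 : r ≤ (1 + r^2)^2 := by nlinarith [sq_nonneg (r - 1), sq_nonneg (r^2)]
    have h2 : ε * r ≤ 1 * r := mul_le_mul_of_nonneg_right hε1 hr
    nlinarith
  set B : Matrix (Fin m) (Fin m) ℂ :=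
    1 + (a:ℂ) • cmap S + (b:ℂ) • (-(Complex.I • cmap (K ω))) with hB
  set H : Matrix (Fin m) (Fin m) ℂ :=
    cmap A0 + (a:ℂ) • cmap (S * A0) + (b:ℂ) • (-(Complex.I • cmap (K ω * A0))) with hH
  have hHB : H = B * cmap A0 := by
    simp only [hH, hB, cmap_mul, add_mul, smul_mul_assoc, neg_mul, one_mul]
  have hHH : Hᴴ = H := by
    simp only [hH, conjTranspose_add, conjTranspose_smul, conjTranspose_neg, ← cmap_ct, hA0sym,
      hSA0, hKA0 ω hω, cmap_neg]
    simp
  have hqH : ∀ z, qf H z = qf (cmap A0) z + a * qf (cmap (S * A0)) z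
      + b * qf (-(Complex.I • cmap (K ω * A0))) z := by
    intro z
    rw [hH, qf_add, qf_add, qf_smul, qf_smul]
  have hqab : ∀ z, |a * qf (cmap (S * A0)) z + b * qf (-(Complex.I • cmap (K ω * A0))) z| ≤
      α * (C3 + C4) * NN z := by
    intro z
    have h1 := hb3 ω hωT z
    have h2 := hb4 ω hωT z
    refine (abs_add_le _ _).trans ?_
    rw [abs_mul, abs_mul, abs_of_nonneg ha0, abs_of_nonneg hb0']
    have h3 := mul_le_mul haα h1 (abs_nonneg _) hα.le
    have h4 := mul_le_mul hbα h2 (abs_nonneg _) hα.le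
    linarith
  have hqlow : ∀ z, c0 / 2 * NN z ≤ qf H z := by
    intro z
    have h1 := (abs_le.1 (hqab z)).1
    have h2 := hb0 ω hωT z
    have h3 := mul_le_mul_of_nonneg_right hα'' (NN_nonneg z)
    rw [hqH]; linarith
  have hqup : ∀ z, qf H z ≤ C6 * NN z := by
    intro z
    have h1 := (abs_le.1 (hqab z)).2
    have h2 := (abs_le.1 (hb5 ω hωT z)).2
    have h3 := NN_nonneg z
    rw [hqH, hC6]; linarith
  have hE := exp_decay (fun t => qf H (u t)) (fun t => 2 * reIP (H.mulVec (u' t)) (u t))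
    (k * (r ^ 2 / (1 + r ^ 2) ^ 2)) (fun t ht => deriv_qf H hHH (hu t ht)) (by
      intro t ht
      set z := u t with hz
      have d1 : reIP (H.mulVec (u' t)) z =
          - qf (B * (((r : ℂ) * Complex.I) • cmap (Aω ω) + cmap L)) z := by
        rw [hHB, ← mulVec_mulVec, heq' t ht, mulVec_neg, reIP_neg_left, mulVec_mulVec, qf]
      have d2 : B * (((r : ℂ) * Complex.I) • cmap (Aω ω) + cmap L) =
          (r:ℂ) • (Complex.I • cmap (Aω ω)) + cmap L
          + (a:ℂ) • ((r:ℂ) • (Complex.I • cmap (S * Aω ω)) + cmap (S * L))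
          + (b:ℂ) • ((r:ℂ) • cmap (K ω * Aω ω) + -(Complex.I • cmap (K ω * L))) := by
        rw [hB, cmap_mul, cmap_mul, cmap_mul, cmap_mul]
        exact mat_id2 _ _ _ _ _ _ _
      have d3 : qf (B * (((r : ℂ) * Complex.I) • cmap (Aω ω) + cmap L)) z =
          qf (cmap L) z + a * (r * qf (Complex.I • cmap (S * Aω ω)) z + qf (cmap (S * L)) z)
          + b * (r * qf (cmap (K ω * Aω ω)) z + qf (-(Complex.I • cmap (K ω * L))) z) := by
        rw [d2, qf_add, qf_add, qf_add, qf_smul, qf_I_symm _ (hAωsym ω), qf_smul, qf_add, qf_smul,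
          qf_smul, qf_add, qf_smul]
        ring
      have hcz := hcons t ht
      rw [← hz, add_mulVec, smul_mulVec] at hcz
      -- projections
      have hPR : Pi1 * R = R := by
        apply Matrix.toLin'.injective
        ext1 φ
        ext1
        simp only [LinearMap.comp_apply, LinearMap.single_apply, toLin'_apply, ← mulVec_mulVec,
          hPi1fix]
      have p1 : ((r : ℂ) * Complex.I) • (cmap (Pi1 * Qω ω)).mulVec z + (cmap R).mulVec z = 0 := by
        have := congrArg (fun x => (cmap Pi1).mulVec x) hcz
        simp only [mulVec_add, mulVec_smul, mulVec_mulVec, ← cmap_mul, hPR, mulVec_zero] at this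
        exact this
      have p2 : r * NN ((cmap ((1 - Pi1) * Qω ω)).mulVec z) = 0 := by
        have h1 : ((r : ℂ) * Complex.I) • (cmap ((1 - Pi1) * Qω ω)).mulVec z = 0 := by
          rw [Matrix.sub_mul, Matrix.one_mul, cmap_sub, sub_mulVec, smul_sub, sub_eq_zero]
          exact add_right_cancel (hcz.trans p1.symm)
        rcases smul_eq_zero.1 h1 with h | h
        · have : r = 0 := by
            rcases mul_eq_zero.1 h with h | h
            · exact_mod_cast h
            · exact absurd h Complex.I_ne_zero
          rw [this, zero_mul]
        · rw [NN_eq_zero.2 h, mul_zero]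
      have p3 : 0 ≤ r * qf (Complex.I • cmap (Tω ω)) z := by
        have h1 : r * qf (Complex.I • cmap (Tω ω)) z =
            qf (cmap (symP St)) ((cmap R).mulVec z) := by
          rw [qf_symP, qf, qf, ← reIP_smul_left, smul_mulVec, hTω]
          simp only
          rw [Matrix.mul_assoc, cmap_mul, cmap_ct, ← mulVec_mulVec, reIP_smul_left, reIP_I, reIP_adj,
            conjTranspose_conjTranspose, mulVec_smul, cmap_mul, ← mulVec_mulVec]
          have h2 : (cmap R).mulVec z =
              -((r:ℂ) • Complex.I • (cmap (Pi1 * Qω ω)).mulVec z) := by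
            rw [smul_smul]; exact eq_neg_of_add_eq_zero_right p1
          rw [reIP_comm ((cmap St).mulVec _)  (Complex.I • _),
            reIP_comm ((cmap St).mulVec _) ((cmap R).mulVec z)]
          conv_rhs => arg 1; rw [h2]
          rw [reIP_neg_left, reIP_smul_left]
          ring
        rw [h1]
        exact hSt z
      have D0 : 0 ≤ qf (cmap L) z := hLnn z
      have M0 : 0 ≤ qf (cmap (symP (S * L) + symP L)) z := hSLnn z
      have Meq : qf (cmap (symP (S * L) + symP L)) z = qf (cmap (S * L)) z + qf (cmap L) z := by
        rw [cmap_add, qf_add, qf_symP, qf_symP]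
      have Xeq : qf (Complex.I • cmap (S * Aω ω)) z =
          qf (Complex.I • cmap (skewP (S * Aω ω - Tω ω))) z + qf (Complex.I • cmap (Tω ω)) z := by
        rw [qf_skewP, cmap_sub, smul_sub, qf_sub]; ring
      have hcore := scal_core c2 C C' C2 ε α r (qf (cmap L) z)
        (qf (cmap (symP (S * L) + symP L)) z) (NN z)
        (qf (Complex.I • cmap (skewP (S * Aω ω - Tω ω))) z)
        (qf (-(Complex.I • cmap (K ω * L))) z) (qf (cmap (K ω * Aω ω)) z)
        (NN ((cmap ((1 - Pi1) * Qω ω)).mulVec z)) hc2 hC hC' hC2 hε hα hr D0 M0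
        (fun s hs => by
          have := hX ω hωT z s hs
          rwa [qf_symP] at this) (fun s hs => hY ω hωT z s hs) (hZ ω hωT z) p2 hε' hα'
      rw [← ha, ← hb] at hcore
      rw [d1, d3, Xeq]
      have ap3 := mul_nonneg ha0 p3
      set η := r ^ 2 / (1 + r ^ 2) ^ 2 with hη
      have hη0 : 0 ≤ η := by positivity
      have hup := hqup z
      have hkη : k * η * qf H z ≤ 2 * (ε * α * c2 / 2 * η * NN z) := by
        have h1 : k * η * qf H z ≤ k * η * (C6 * NN z) :=
          mul_le_mul_of_nonneg_left hup (by positivity)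
        have h2 : k * η * (C6 * NN z) = 2 * (ε * α * c2 / 2 * η * NN z) := by
          rw [hk]; field_simp
        linarith
      rw [Meq] at hcore
      linarith) t ht
  have hlow := hqlow (u t)
  have hup := hqup (u 0)
  set η := r ^ 2 / (1 + r ^ 2) ^ 2 with hη
  have hfin : NN (u t) ≤ C6 / (c0 / 2) * (Real.exp (-(k / 2 * η * t)))^2 * NN (u 0) := by
    have h1 : (Real.exp (-(k / 2 * η * t)))^2 = Real.exp (-(k * η * t)) := by
      rw [← Real.exp_nat_mul]; congr 1; push_cast; ring
    have h2 := mul_le_mul_of_nonneg_left hup (Real.exp_pos (-(k * η * t))).le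
    rw [h1, div_mul_eq_mul_div, div_mul_eq_mul_div, le_div_iff₀ (by positivity)]
    linarith
  have hs := Real.sqrt_le_sqrt hfin
  rw [Real.sqrt_mul (by positivity), Real.sqrt_mul (by positivity),
    Real.sqrt_sq (Real.exp_pos _).le] at hs
  exact hs
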